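/- Let A = ⟨Q,Σ⟩ be a PFA with |Q| = n and |Σ| = m, let ℓ > 0, let φ be a satisfying assignment for the SAT instance (V,C) encoding (A,ℓ), let χ : {1,…,ℓ} → {1,…,m} assign to each t the unique i with φ(x_{i,t}) = 1, let w = a_{χ(1)}⋯a_{χ(ℓ)}, and let w_t denote the length-t prefix of w (w_0 = ε). Then for each t = 0,1,…,ℓ and each k ∈ {1,…,n}, if q_k ∈ δ(Q,w_t) then φ(y_{k,t}) = 1. -/

import Mathlib

open Set

/-- The extension of the transition function of a PFA (with states `Fin n` and letters
`Fin m`) to subsets of states and words: `δ(S,ε) = S`, `δ(S,va) = ⋃_{q ∈ δ(S,v)} δ(q,a)`. -/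
def pfaExt {n m : ℕ} (δ : Fin n → Fin m → Option (Fin n))
    (S : Set (Fin n)) (w : List (Fin m)) : Set (Fin n) :=
  w.foldl (fun T a => {p | ∃ q ∈ T, δ q a = some p}) S

/-- A nonempty word `w = a₁⋯a_ℓ` is carefully synchronizing for the PFA `δ` if (C1) its
first letter is defined at every state, (C2) for `1 < t ≤ ℓ` the letter `a_t` is defined
at every state of `δ(Q, a₁⋯a_{t-1})`, and (C3) `|δ(Q,w)| = 1`. -/
def CarefulSync {n m : ℕ} (δ : Fin n → Fin m → Option (Fin n)) (w : List (Fin m)) : Prop :=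
  w ≠ [] ∧
  (∀ t : Fin w.length, ∀ q ∈ pfaExt δ Set.univ (w.take t.val), (δ q (w.get t)).isSome) ∧
  (pfaExt δ Set.univ w).ncard = 1

/-- Boolean variables of the SAT instance encoding `(A, ℓ)`: letter variables `x i t`
(`1 ≤ i ≤ m`, `1 ≤ t ≤ ℓ`) and state variables `y j t` (`1 ≤ j ≤ n`, `0 ≤ t ≤ ℓ`). -/
inductive SatVar (n m ℓ : ℕ) : Type where
  | x : Fin m → Fin ℓ → SatVar n m ℓ
  | y : Fin n → Fin (ℓ + 1) → SatVar n m ℓ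
deriving DecidableEq

/-- A literal: a variable together with a polarity (`true` = positive, `false` = negated). -/
abbrev SatLit (n m ℓ : ℕ) := SatVar n m ℓ × Bool

/-- A clause is a disjunction of literals, represented as a list. -/
abbrev SatClause (n m ℓ : ℕ) := List (SatLit n m ℓ)

/-- A truth assignment satisfies a clause if it makes at least one of its literals true. -/
def SatisfiesClause {n m ℓ : ℕ} (φ : SatVar n m ℓ → Bool) (c : SatClause n m ℓ) : Prop :=
  ∃ l ∈ c, φ l.1 = l.2

/-- A truth assignment satisfies a set of clauses if it satisfies every clause in it. -/
def Satisfies {n m ℓ : ℕ} (φ : SatVar n m ℓ → Bool) (C : Set (SatClause n m ℓ)) : Prop :=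
  ∀ c ∈ C, SatisfiesClause φ c

/-- The group `I` of initial clauses: the unit clauses `y_{j,0}` for `1 ≤ j ≤ n`. -/
def clausesI (n m ℓ : ℕ) : Set (SatClause n m ℓ) :=
  {c | ∃ j : Fin n, c = [(SatVar.y j 0, true)]}

/-- The group `L` of letter clauses: for each `t`, the clause `x_{1,t} ∨ ⋯ ∨ x_{m,t}`
and the clauses `¬x_{r,t} ∨ ¬x_{s,t}` for `1 ≤ r < s ≤ m`. -/
def clausesL (n m ℓ : ℕ) : Set (SatClause n m ℓ) :=
  {c | ∃ t : Fin ℓ, c = (List.finRange m).map fun i => ((SatVar.x i t : SatVar n m ℓ), true)} ∪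
  {c | ∃ t : Fin ℓ, ∃ r s : Fin m, r < s ∧
    c = [(SatVar.x r t, false), (SatVar.x s t, false)]}

/-- The group `T` of transition clauses: for each `t` and each pair `(q_j, a_i)`, the
clause `¬y_{j,t-1} ∨ ¬x_{i,t} ∨ y_{k,t}` if `δ(q_j, a_i) = {q_k}`, and the clause
`¬y_{j,t-1} ∨ ¬x_{i,t}` if `δ(q_j, a_i)` is undefined. -/
def clausesT {n m : ℕ} (δ : Fin n → Fin m → Option (Fin n)) (ℓ : ℕ) :
    Set (SatClause n m ℓ) :=
  {c | ∃ (t : Fin ℓ) (j : Fin n) (i : Fin m) (k : Fin n), δ j i = some k ∧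
    c = [(SatVar.y j t.castSucc, false), (SatVar.x i t, false), (SatVar.y k t.succ, true)]} ∪
  {c | ∃ (t : Fin ℓ) (j : Fin n) (i : Fin m), δ j i = none ∧
    c = [(SatVar.y j t.castSucc, false), (SatVar.x i t, false)]}

/-- The group `S` of synchronization clauses: `¬y_{r,ℓ} ∨ ¬y_{s,ℓ}` for `1 ≤ r < s ≤ n`. -/
def clausesS (n m ℓ : ℕ) : Set (SatClause n m ℓ) :=
  {c | ∃ r s : Fin n, r < s ∧
    c = [(SatVar.y r (Fin.last ℓ), false), (SatVar.y s (Fin.last ℓ), false)]}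

/-- The set `C = I ∪ L ∪ T ∪ S` of clauses of the SAT instance encoding `(A, ℓ)`. -/
def encodingClauses {n m : ℕ} (δ : Fin n → Fin m → Option (Fin n)) (ℓ : ℕ) :
    Set (SatClause n m ℓ) :=
  clausesI n m ℓ ∪ clausesL n m ℓ ∪ clausesT δ ℓ ∪ clausesS n m ℓ

/-- Claim 2: with `φ` a satisfying assignment of the SAT instance encoding `(A, ℓ)`,
`χ` the map assigning to each `t` the unique `i` with `φ(x_{i,t}) = 1`, and
`w = a_{χ(1)} ⋯ a_{χ(ℓ)}`, for each `t = 0, 1, …, ℓ` and each state `q_k`, if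
`q_k ∈ δ(Q, w_t)` (where `w_t` is the length-`t` prefix of `w`), then `φ(y_{k,t}) = 1`. -/
theorem sat_active_state_variable_true {n m ℓ : ℕ} (hn : 0 < n) (hm : 0 < m) (hℓ : 0 < ℓ)
    (δ : Fin n → Fin m → Option (Fin n))
    (φ : SatVar n m ℓ → Bool) (hφ : Satisfies φ (encodingClauses δ ℓ))
    (χ : Fin ℓ → Fin m) (hχ : ∀ t : Fin ℓ, ∀ i : Fin m, φ (SatVar.x i t) = true ↔ i = χ t) :
    ∀ t : Fin (ℓ + 1), ∀ k : Fin n,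
      k ∈ pfaExt δ Set.univ (((List.finRange ℓ).map χ).take t.val) →
        φ (SatVar.y k t) = true := by
  intro t
  induction t using Fin.induction with
  | zero =>
    intro k _
    obtain ⟨l, hl, h⟩ := hφ [(SatVar.y k 0, true)] (Or.inl (Or.inl (Or.inl ⟨k, rfl⟩)))
    rw [List.mem_singleton] at hl
    subst hl
    exact h
  | succ t ih =>
    intro k hk
    have htake : ((List.finRange ℓ).map χ).take (t.succ.val) =
        ((List.finRange ℓ).map χ).take (t.castSucc.val) ++ [χ t] := by
      have hlt : t.val < ((List.finRange ℓ).map χ).length := by simp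
      rw [Fin.val_succ, Fin.val_castSucc, List.take_succ_eq_append_getElem hlt]
      simp
    rw [htake, pfaExt, List.foldl_append] at hk
    obtain ⟨q, hq, hqk⟩ := hk
    have hy := ih q hq
    have hx := (hχ t (χ t)).2 rfl
    obtain ⟨l, hl, h⟩ := hφ _ (Or.inl (Or.inr (Or.inl ⟨t, q, χ t, k, hqk, rfl⟩)))
    simp only [List.mem_cons, List.not_mem_nil, or_false] at hl
    rcases hl with rfl | rfl | rfl
    · simp [hy] at h
    · simp [hx] at h
    · exact h
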